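/- Let N ≥ 4 be an integer, k = (N−1)/2, and γ > 0 real. The function z ↦ ∏_{1≤i<j≤N} |z_i − z_j|^{−2γ/k} is Lebesgue integrable on a neighborhood of every point p ∈ ℂ^N whose maximal coordinate multiplicity max_{w∈ℂ} #{i : p_i = w} is at most ⌊N/2⌋, if and only if γ < (N−1)/⌊N/2⌋. In particular this threshold equals 2 if N is odd and 2(1 − 1/N) if N is even, so ℙ¹ is uniformly Gibbs polystable. -/

import Mathlib

open MeasureTheory Topology
open scoped ENNReal Classical

/-!
Let `d` be the real dimension of the ambient space (`d = 2` for `ℂ`). Near a point `p`, only the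
pairs of indices in a common cluster (a set `{i | p i = w}`) matter. Choosing in every cluster of
size `n` a centre `c`, the index with the least product of distances to the others, bounds the
product over the `n (n - 1)` ordered pairs of the cluster below by `∏_{j ≠ c} |z_c - z_j| ^ n`.
In coordinates translated by the centres, the weight with exponent `-s` on ordered pairs is
therefore dominated by a sum over all choices of centres of products of one-variable weights
`|u_j| ^ (-s n)`, which are integrable at `0` as soon as `s n < d`.

Conversely, all `n (n - 1)` ordered distances in a cluster are at most `2 |u|`, where `u` lives in
dimension `(n - 1) d`, so integrability forces `s n (n - 1) < (n - 1) d`, that is `s n < d`. The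
worst cluster has `n = ⌊N / 2⌋`, and `s = 2 γ / (N - 1)`.
-/

section LocalIntegrability

variable {X : Type*} [MeasurableSpace X] {μ : Measure X} {l : Filter X} {f g : X → ℝ≥0∞}

theorem integrableAtFilter_iff_lintegral_ne_top (hf : Measurable f) :
    IntegrableAtFilter f l μ ↔ ∃ s ∈ l, ∫⁻ x in s, f x ∂μ ≠ ∞ := by
  simp only [IntegrableAtFilter, IntegrableOn, Integrable, hasFiniteIntegral_iff_enorm,
    enorm_eq_self, lt_top_iff_ne_top, hf.aestronglyMeasurable, true_and]

theorem integrableAtFilter_of_eventually_le (hg : IntegrableAtFilter g l μ)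
    (hf : Measurable f) (hgm : Measurable g) (hfg : ∀ᶠ x in l, f x ≤ g x) :
    IntegrableAtFilter f l μ := by
  rw [integrableAtFilter_iff_lintegral_ne_top hgm] at hg
  rw [integrableAtFilter_iff_lintegral_ne_top hf]
  obtain ⟨s, hs, hsg⟩ := hg
  refine ⟨s ∩ {x | f x ≤ g x}, Filter.inter_mem hs hfg, ne_top_of_le_ne_top hsg ?_⟩
  exact (setLIntegral_mono hgm fun x hx => hx.2).trans
    (lintegral_mono_set Set.inter_subset_left)

theorem integrableAtFilter_const_mul_iff {c : ℝ≥0∞} (hc₀ : c ≠ 0) (hc : c ≠ ∞)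
    (hf : Measurable f) :
    IntegrableAtFilter (fun x => c * f x) l μ ↔ IntegrableAtFilter f l μ := by
  simp [integrableAtFilter_iff_lintegral_ne_top, hf, hf.const_mul c, lintegral_const_mul,
    ENNReal.mul_eq_top, hc₀, hc]

theorem integrableAtFilter_finsetSum {κ : Type*} (t : Finset κ) {F : κ → X → ℝ≥0∞}
    (hF : ∀ i ∈ t, IntegrableAtFilter (F i) l μ) :
    IntegrableAtFilter (fun x => ∑ i ∈ t, F i x) l μ := by
  induction t using Finset.induction_on with
  | empty => exact ⟨Set.univ, Filter.univ_mem, by simp⟩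
  | insert i t hi ih =>
    simp only [Finset.sum_insert hi]
    exact (hF i (t.mem_insert_self i)).add (ih fun j hj => hF j (Finset.mem_insert_of_mem hj))

variable [TopologicalSpace X] {x : X}

theorem integrableAtFilter_nhds_of_mul_continuousAt (hf : Measurable f) (hg : Measurable g)
    (hgx : ContinuousAt g x) (hgx₀ : g x ≠ 0)
    (h : IntegrableAtFilter (fun y => f y * g y) (𝓝 x) μ) : IntegrableAtFilter f (𝓝 x) μ := by
  obtain ⟨c, hc₀, hcg⟩ := exists_between (pos_iff_ne_zero.2 hgx₀)
  rw [← integrableAtFilter_const_mul_iff hc₀.ne' hcg.ne_top hf]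
  refine integrableAtFilter_of_eventually_le h (hf.const_mul c) (hf.mul hg) ?_
  filter_upwards [hgx.eventually_const_lt hcg] with y hy
  rw [mul_comm]
  gcongr

theorem integrableAtFilter_nhds_mul_continuousAt (hf : Measurable f) (hg : Measurable g)
    (hgx : ContinuousAt g x) (hgx_top : g x ≠ ∞) (h : IntegrableAtFilter f (𝓝 x) μ) :
    IntegrableAtFilter (fun y => f y * g y) (𝓝 x) μ := by
  obtain ⟨c, hgc, hc⟩ := exists_between (lt_top_iff_ne_top.2 hgx_top)
  rw [← integrableAtFilter_const_mul_iff (pos_of_gt hgc).ne' hc.ne hf] at h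
  refine integrableAtFilter_of_eventually_le h (hf.mul hg) (hf.const_mul c) ?_
  filter_upwards [hgx.eventually_lt_const hgc] with y hy
  rw [mul_comm]
  gcongr

end LocalIntegrability

section Transport

variable {X Y : Type*} [TopologicalSpace X] [MeasurableSpace X] [TopologicalSpace Y]
  [MeasurableSpace Y] {μ : Measure X} {ν : Measure Y}

theorem integrableAtFilter_nhds_comp_homeomorph_iff [BorelSpace X] [BorelSpace Y]
    (e : X ≃ₜ Y) (he : MeasurePreserving e μ ν) {f : Y → ℝ≥0∞} {x : X} :
    IntegrableAtFilter (f ∘ e) (𝓝 x) μ ↔ IntegrableAtFilter f (𝓝 (e x)) ν := by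
  rw [← e.map_nhds_eq, ← he.map_eq, e.measurableEmbedding.integrableAtFilter_map_iff]

theorem integrableAtFilter_of_comp_fst [SFinite μ] [SFinite ν] [ν.IsOpenPosMeasure]
    {f : X → ℝ≥0∞} (hf : Measurable f) {z : X × Y}
    (h : IntegrableAtFilter (fun z => f z.1) (𝓝 z) (μ.prod ν)) :
    IntegrableAtFilter f (𝓝 z.1) μ := by
  rw [integrableAtFilter_iff_lintegral_ne_top (by fun_prop)] at h
  rw [integrableAtFilter_iff_lintegral_ne_top hf]
  obtain ⟨s, hs, hfin⟩ := h
  obtain ⟨u, hu, v, hv, huv⟩ := mem_nhds_prod_iff.1 hs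
  refine ⟨u, hu, fun hu_top => hfin (top_unique ?_)⟩
  calc ∞ = (∫⁻ x in u, f x ∂μ) * ν v := by
        rw [hu_top, ENNReal.top_mul (Measure.measure_pos_of_mem_nhds ν hv).ne']
    _ = ∫⁻ z in u ×ˢ v, f z.1 ∂μ.prod ν := by
        rw [← Measure.prod_restrict]
        simpa using (lintegral_prod_mul (μ := μ.restrict u) (ν := ν.restrict v)
          (f := f) (g := 1) hf.aemeasurable aemeasurable_const).symm
    _ ≤ ∫⁻ z in s, f z.1 ∂μ.prod ν := lintegral_mono_set huv

theorem integrableAtFilter_of_comp_domRestrict {ι E : Type*} [Fintype ι] [TopologicalSpace E]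
    [MeasureSpace E] [BorelSpace E] [SecondCountableTopology E]
    [SigmaFinite (volume : Measure E)] [(volume : Measure E).IsOpenPosMeasure]
    {P : ι → Prop} [DecidablePred P] {f : ({i // P i} → E) → ℝ≥0∞}
    (hf : Measurable f) {u : ι → E}
    (h : IntegrableAtFilter (fun u : ι → E => f fun i => u i) (𝓝 u)) :
    IntegrableAtFilter f (𝓝 fun i => u i) := by
  let e := Homeomorph.piEquivPiSubtypeProd P (fun _ : ι => E)
  have he : MeasurePreserving e := volume_preserving_piEquivPiSubtypeProd _ _
  exact integrableAtFilter_of_comp_fst (z := e u) hf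
    ((integrableAtFilter_nhds_comp_homeomorph_iff e he (f := fun q => f q.1)).1 h)

end Transport

section Product

theorem lintegral_fin_prod_eq_prod {n : ℕ} {X : Fin n → Type*} [∀ i, MeasurableSpace (X i)]
    {μ : ∀ i, Measure (X i)} [∀ i, SigmaFinite (μ i)] {f : ∀ i, X i → ℝ≥0∞}
    (hf : ∀ i, Measurable (f i)) :
    ∫⁻ x, ∏ i, f i (x i) ∂Measure.pi μ = ∏ i, ∫⁻ x, f i x ∂μ i := by
  induction n with
  | zero => simp
  | succ n ih =>
    have hsucc : Measurable fun x : ∀ i : Fin n, X i.succ => ∏ i, f i.succ (x i) :=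
      Finset.measurable_prod _ fun i _ => (hf i.succ).comp (measurable_pi_apply i)
    rw [← (measurePreserving_piFinSuccAbove μ 0).symm.lintegral_comp (by fun_prop),
      Fin.prod_univ_succ, ← ih fun i => hf i.succ,
      ← lintegral_prod_mul (hf 0).aemeasurable hsucc.aemeasurable]
    simp only [Fin.prod_univ_succ]
    rfl

variable {ι : Type*} [Fintype ι] {X : ι → Type*} [∀ i, MeasurableSpace (X i)]
  {μ : ∀ i, Measure (X i)} [∀ i, SigmaFinite (μ i)] {f : ∀ i, X i → ℝ≥0∞}

theorem lintegral_fintype_prod_eq_prod (hf : ∀ i, Measurable (f i)) :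
    ∫⁻ x, ∏ i, f i (x i) ∂Measure.pi μ = ∏ i, ∫⁻ x, f i x ∂μ i := by
  have e := (Fintype.equivFin ι).symm
  rw [← (measurePreserving_piCongrLeft μ e).lintegral_comp (by fun_prop)]
  simp_rw [← e.prod_comp, MeasurableEquiv.coe_piCongrLeft, Equiv.piCongrLeft_apply_apply]
  exact lintegral_fin_prod_eq_prod fun i => hf (e i)

theorem integrableAtFilter_pi_prod {l : ∀ i, Filter (X i)} (hf : ∀ i, Measurable (f i))
    (h : ∀ i, IntegrableAtFilter (f i) (l i) (μ i)) :
    IntegrableAtFilter (fun x => ∏ i, f i (x i)) (Filter.pi l) (Measure.pi μ) := by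
  simp only [integrableAtFilter_iff_lintegral_ne_top, hf] at h
  rw [integrableAtFilter_iff_lintegral_ne_top (by fun_prop)]
  choose s hs hfin using h
  refine ⟨Set.univ.pi s, Filter.pi_mem_pi Set.finite_univ fun i _ => hs i, ?_⟩
  rw [Measure.restrict_pi_pi, lintegral_fintype_prod_eq_prod hf]
  exact ENNReal.prod_ne_top fun i _ => hfin i

end Product

section NormPower

variable {E : Type*} [NormedAddCommGroup E] [NormedSpace ℝ E] [FiniteDimensional ℝ E]
  [Nontrivial E] [MeasurableSpace E] [BorelSpace E] {μ : Measure E} [μ.IsAddHaarMeasure]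

theorem integrableOn_ball_norm_rpow_neg_iff {a r : ℝ} (hr : 0 < r) :
    IntegrableOn (fun y : E => ‖y‖ ^ (-a)) (Metric.ball 0 r) μ ↔ a < Module.finrank ℝ E := by
  have hradial : IntegrableOn (fun t : ℝ => t ^ (Module.finrank ℝ E - 1) • t ^ (-a))
        (Set.Ioo 0 r) ↔
      IntegrableOn (fun t : ℝ => t ^ ((Module.finrank ℝ E : ℝ) - 1 - a)) (Set.Ioo 0 r) := by
    refine integrableOn_congr_fun (fun t ht => ?_) measurableSet_Ioo
    simp only [smul_eq_mul]
    rw [sub_eq_add_neg, Real.rpow_add ht.1, ← Real.rpow_natCast, Nat.cast_sub Module.finrank_pos,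
      Nat.cast_one]
  rw [integrableOn_fun_norm_addHaar μ (f := fun t => t ^ (-a)), hradial,
    intervalIntegral.integrableOn_Ioo_rpow_iff hr]
  constructor <;> intro h <;> linarith

theorem integrableAtFilter_enorm_rpow_neg_iff {a : ℝ} :
    IntegrableAtFilter (fun y : E => ‖y‖ₑ ^ (-a)) (𝓝 0) μ ↔ a < Module.finrank ℝ E := by
  have hae : ∀ᵐ y ∂μ, ‖‖y‖ₑ ^ (-a)‖ₑ = ‖‖y‖ ^ (-a)‖ₑ := by
    filter_upwards [Measure.ae_ne μ 0] with y hy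
    rw [enorm_eq_self, ← ofReal_norm, ENNReal.ofReal_rpow_of_pos (norm_pos_iff.2 hy),
      Real.enorm_of_nonneg (by positivity)]
  constructor
  · intro h
    obtain ⟨s, hs, hint⟩ := h.congr'_enorm (g := fun y => ‖y‖ ^ (-a))
      (Measurable.aestronglyMeasurable (by fun_prop)) hae
    obtain ⟨r, hr, hrs⟩ := Metric.mem_nhds_iff.1 hs
    exact (integrableOn_ball_norm_rpow_neg_iff hr).1 (hint.mono_set hrs)
  · intro h
    have hball : IntegrableAtFilter (fun y : E => ‖y‖ ^ (-a)) (𝓝 0) μ :=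
      ⟨_, Metric.ball_mem_nhds 0 one_pos, (integrableOn_ball_norm_rpow_neg_iff one_pos).2 h⟩
    exact hball.congr'_enorm (by fun_prop) (hae.mono fun y hy => hy.symm)

end NormPower

section Shear

variable {ι E : Type*} {ρ : ι → ι}

/-- The change of coordinates translating every `u i` with `ρ i ≠ i` by `u (ρ i)`; idempotence of
`ρ` makes the translating coordinates fixed, so that the inverse subtracts them again. -/
noncomputable def shear [AddGroup E] [TopologicalSpace E] [IsTopologicalAddGroup E] (ρ : ι → ι)
    (hρ : ∀ i, ρ (ρ i) = ρ i) : (ι → E) ≃ₜ (ι → E) where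
  toFun u i := if ρ i = i then u i else u i + u (ρ i)
  invFun z i := if ρ i = i then z i else z i - z (ρ i)
  left_inv u := by ext i; by_cases h : ρ i = i <;> simp [h, hρ]
  right_inv z := by ext i; by_cases h : ρ i = i <;> simp [h, hρ]
  continuous_toFun := by
    refine continuous_pi fun i => ?_
    split_ifs <;> fun_prop
  continuous_invFun := by
    refine continuous_pi fun i => ?_
    split_ifs <;> fun_prop

theorem shear_symm_apply_eq_zero [AddGroup E] [TopologicalSpace E] [IsTopologicalAddGroup E]
    (hρ : ∀ i, ρ (ρ i) = ρ i) {p : ι → E} {i : ι} (hp : p (ρ i) = p i) (hi : ρ i ≠ i) :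
    (shear ρ hρ).symm p i = 0 := by
  simp [shear, hi, hp]

theorem measurePreserving_shear [Fintype ι] [AddCommGroup E] [TopologicalSpace E]
    [IsTopologicalAddGroup E] [MeasureSpace E] [MeasurableAdd₂ E]
    [SigmaFinite (volume : Measure E)] [(volume : Measure E).IsAddRightInvariant]
    (hρ : ∀ i, ρ (ρ i) = ρ i) : MeasurePreserving (shear (E := E) ρ hρ) := by
  let e := MeasurableEquiv.piEquivPiSubtypeProd (fun _ : ι => E) (fun i => ρ i = i)
  have he : MeasurePreserving e := volume_preserving_piEquivPiSubtypeProd _ _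
  let g (x : {i // ρ i = i} → E) (y : {i // ¬ρ i = i} → E) : {i // ¬ρ i = i} → E :=
    fun i => y i + x ⟨ρ i, hρ i⟩
  have hg : MeasurePreserving (fun q : ({i // ρ i = i} → E) × ({i // ¬ρ i = i} → E) =>
      (q.1, g q.1 q.2)) :=
    (MeasurePreserving.id volume).skew_product (by fun_prop)
      (ae_of_all _ fun x => map_add_right_eq_self volume
        fun i : {i // ¬ρ i = i} => x ⟨ρ i, hρ i⟩)
  exact he.symm.comp (hg.comp he)

end Shear

section Clusters

open scoped Finset

variable {ι κ M : Type*}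

/-- `ρ` selects a centre in every cluster (fibre) of `p`: it sends each index to the chosen
representative of its cluster. -/
structure IsClusterCenter (p : ι → κ) (ρ : ι → ι) : Prop where
  map_center : ∀ i, p (ρ i) = p i
  center_eq : ∀ ⦃i j⦄, p i = p j → ρ i = ρ j

theorem IsClusterCenter.idem {p : ι → κ} {ρ : ι → ι} (hρ : IsClusterCenter p ρ) (i : ι) :
    ρ (ρ i) = ρ i :=
  hρ.center_eq (hρ.map_center i)

theorem exists_isClusterCenter_le [Finite ι] [LinearOrder M] (p : ι → κ) (f : ι → M) :
    ∃ ρ, IsClusterCenter p ρ ∧ ∀ i, f (ρ i) ≤ f i := by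
  have hmin (w : Set.range p) : ∃ k, p k = w ∧ ∀ i, p i = w → f k ≤ f i := by
    obtain ⟨_, i, rfl⟩ := w
    simpa using Set.exists_min_image {j | p j = p i} f (Set.toFinite _) ⟨i, rfl⟩
  choose r hr_map hr_le using hmin
  exact ⟨fun i => r ⟨p i, i, rfl⟩,
    ⟨fun i => hr_map _, fun i j hij => congrArg r (Subtype.ext hij)⟩, fun i => hr_le _ i rfl⟩

theorem exists_isClusterCenter_prod_pow_le [Fintype ι] [CommMonoid M] [LinearOrder M]
    [IsOrderedMonoid M] (p : ι → κ) (h : ι → ι → M) :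
    ∃ ρ, IsClusterCenter p ρ ∧
      ∏ j with ρ j ≠ j, h (ρ j) j ^ #{i | p i = p j} ≤
        ∏ a ∈ Finset.univ.offDiag with p a.1 = p a.2, h a.1 a.2 := by
  obtain ⟨ρ, hρ, hle⟩ :=
    exists_isClusterCenter_le p fun i => ∏ j with p i = p j ∧ i ≠ j, h i j
  refine ⟨ρ, hρ, ?_⟩
  calc ∏ j with ρ j ≠ j, h (ρ j) j ^ #{i | p i = p j}
      = ∏ j with ρ j ≠ j, ∏ i with p i = p j, h (ρ i) j := by
        refine Finset.prod_congr rfl fun j _ => (Finset.prod_eq_pow_card fun i hi => ?_).symm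
        rw [hρ.center_eq (by simpa using hi)]
    _ = ∏ i, ∏ j with p (ρ i) = p j ∧ ρ i ≠ j, h (ρ i) j := by
        refine Finset.prod_comm' fun j i => ?_
        simp only [Finset.mem_filter_univ, Finset.mem_univ, hρ.map_center]
        constructor
        · rintro ⟨hj, hij⟩
          exact ⟨⟨hij, hρ.center_eq hij ▸ hj⟩, trivial⟩
        · rintro ⟨⟨hij, hj⟩, -⟩
          exact ⟨hρ.center_eq hij ▸ hj, hij⟩
    _ ≤ ∏ i, ∏ j with p i = p j ∧ i ≠ j, h i j := Finset.prod_le_prod' fun i _ => hle i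
    _ = ∏ a ∈ Finset.univ.offDiag with p a.1 = p a.2, h a.1 a.2 := by
        rw [Finset.prod_finset_product _ Finset.univ fun i => {j | p i = p j ∧ i ≠ j}]
        simp [and_comm]

end Clusters

section Collapse

open scoped Finset

variable {ι : Type*} {S : Finset ι} {o : ι}

/-- The self-map sending all of `S` to `o` and fixing everything else; for `o ∈ S` it is the
retraction that merges the indices of `S` into a single cluster centred at `o`. -/
noncomputable def collapse (S : Finset ι) (o i : ι) : ι :=
  if i ∈ S then o else i

theorem collapse_eq_collapse_iff (ho : o ∈ S) {i j : ι} :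
    collapse S o i = collapse S o j ↔ i = j ∨ i ∈ S ∧ j ∈ S := by
  grind [collapse]

theorem collapse_collapse (S : Finset ι) (o i : ι) :
    collapse S o (collapse S o i) = collapse S o i := by
  grind [collapse]

theorem filter_collapse_ne [Fintype ι] : ({i | collapse S o i ≠ i} : Finset ι) = S.erase o := by
  grind [collapse]

theorem exists_card_fibre_eq {κ : Type*} [Fintype ι] [Infinite κ] {m : ℕ} (hm : 0 < m)
    (hmι : m ≤ Fintype.card ι) :
    ∃ p : ι → κ, (∀ w, #{i | p i = w} ≤ m) ∧ ∃ w, #{i | p i = w} = m := by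
  obtain ⟨S, -, hS⟩ := Finset.exists_subset_card_eq (s := (Finset.univ : Finset ι)) hmι
  obtain ⟨o, ho⟩ : S.Nonempty := Finset.card_pos.1 (hS ▸ hm)
  let e : ι ↪ κ := (Fintype.equivFin ι).toEmbedding.trans
    (Fin.valEmbedding.trans (Infinite.natEmbedding κ))
  have hfibre i : ({j | e (collapse S o j) = e (collapse S o i)} : Finset ι) =
      if i ∈ S then S else {i} := by
    ext j
    simp only [Finset.mem_filter_univ, e.injective.eq_iff, collapse_eq_collapse_iff ho]
    grind
  refine ⟨fun i => e (collapse S o i), fun w => ?_, e (collapse S o o), ?_⟩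
  swap
  · rw [hfibre, if_pos ho, hS]
  obtain hempty | ⟨i, hi⟩ := Finset.eq_empty_or_nonempty {i | e (collapse S o i) = w}
  · simp [hempty]
  · rw [← (Finset.mem_filter_univ i).1 hi, hfibre]
    split_ifs
    · exact hS.le
    · exact hm

end Collapse

theorem ennreal_rpow_neg_anti {x y : ℝ≥0∞} {s : ℝ} (hs : 0 ≤ s) (hxy : x ≤ y) :
    y ^ (-s) ≤ x ^ (-s) := by
  rw [ENNReal.rpow_neg, ENNReal.rpow_neg, ENNReal.inv_le_inv]
  gcongr

section PairDist

variable {ι E : Type*} [NormedAddCommGroup E]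

/-- The product of the distances `|z_i - z_j|` over the *ordered* pairs `(i, j) ∈ T`; for
`T = Finset.univ.offDiag` it is the square of the absolute value of the Vandermonde determinant.
It is `ℝ≥0∞`-valued so that negative powers are `∞` on the diagonals. -/
noncomputable def pairDist (T : Finset (ι × ι)) (z : ι → E) : ℝ≥0∞ :=
  ∏ a ∈ T, ‖z a.1 - z a.2‖ₑ

theorem pairDist_ne_top (T : Finset (ι × ι)) (z : ι → E) : pairDist T z ≠ ∞ :=
  ENNReal.prod_ne_top fun _ _ => enorm_ne_top

theorem pairDist_ne_zero {T : Finset (ι × ι)} {z : ι → E} (hz : ∀ a ∈ T, z a.1 ≠ z a.2) :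
    pairDist T z ≠ 0 :=
  Finset.prod_ne_zero_iff.2 fun a ha => enorm_ne_zero.2 (sub_ne_zero.2 (hz a ha))

theorem continuous_pairDist (T : Finset (ι × ι)) : Continuous (pairDist (E := E) T) := by
  have hcoe : pairDist (E := E) T = fun z => ((∏ a ∈ T, ‖z a.1 - z a.2‖₊ : NNReal) : ℝ≥0∞) := by
    ext z
    simp only [pairDist, ENNReal.ofNNReal_finsetProd, enorm_eq_nnnorm]
  rw [hcoe]
  fun_prop

theorem pairDist_rpow_neg_eq_mul {T T' : Finset (ι × ι)} (hT : T' ⊆ T) (s : ℝ) (z : ι → E) :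
    pairDist T z ^ (-s) = pairDist T' z ^ (-s) * pairDist (T \ T') z ^ (-s) := by
  rw [← ENNReal.mul_rpow_of_ne_top (pairDist_ne_top _ _) (pairDist_ne_top _ _), pairDist,
    ← Finset.prod_sdiff hT, mul_comm, pairDist, pairDist]

theorem measurable_pairDist_rpow [Countable ι] [MeasurableSpace E] [BorelSpace E]
    [SecondCountableTopology E] (T : Finset (ι × ι)) (s : ℝ) :
    Measurable fun z : ι → E => pairDist T z ^ s :=
  (continuous_pairDist T).measurable.pow_const s

variable [Fintype ι] [MeasureSpace E] [BorelSpace E] [SecondCountableTopology E]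
  {T T' : Finset (ι × ι)} {s : ℝ} {p : ι → E}

theorem integrableAtFilter_pairDist_of_subset (hT : T' ⊆ T) (hs : 0 ≤ s)
    (h : IntegrableAtFilter (fun z : ι → E => pairDist T z ^ (-s)) (𝓝 p)) :
    IntegrableAtFilter (fun z : ι → E => pairDist T' z ^ (-s)) (𝓝 p) := by
  simp only [pairDist_rpow_neg_eq_mul hT] at h
  refine integrableAtFilter_nhds_of_mul_continuousAt (measurable_pairDist_rpow _ _)
    (measurable_pairDist_rpow _ _)
    (ENNReal.continuous_rpow_const.comp (continuous_pairDist _)).continuousAt ?_ h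
  rw [ENNReal.rpow_neg, ENNReal.inv_ne_zero]
  exact ENNReal.rpow_ne_top_of_nonneg hs (pairDist_ne_top _ _)

theorem integrableAtFilter_pairDist_of_sdiff_separated (hT : T' ⊆ T)
    (hsep : ∀ a ∈ T \ T', p a.1 ≠ p a.2)
    (h : IntegrableAtFilter (fun z : ι → E => pairDist T' z ^ (-s)) (𝓝 p)) :
    IntegrableAtFilter (fun z : ι → E => pairDist T z ^ (-s)) (𝓝 p) := by
  simp only [pairDist_rpow_neg_eq_mul hT]
  refine integrableAtFilter_nhds_mul_continuousAt (measurable_pairDist_rpow _ _)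
    (measurable_pairDist_rpow _ _)
    (ENNReal.continuous_rpow_const.comp (continuous_pairDist _)).continuousAt ?_ h
  exact ENNReal.rpow_ne_top_of_ne_zero (pairDist_ne_zero hsep) (pairDist_ne_top _ _)

end PairDist

section StarWeight

open scoped Finset

variable {ι E : Type*} [Fintype ι] [NormedAddCommGroup E] {ρ : ι → ι}

/-- The weight `∏ |z_i - z_{ρ i}| ^ (-a_i)` of the graph joining every index to its centre `ρ i`.
This graph is a union of stars, so the weight splits into one-variable factors after `shear ρ`. -/
noncomputable def starWeight (ρ : ι → ι) (a : ι → ℝ) (z : ι → E) : ℝ≥0∞ :=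
  ∏ i with ρ i ≠ i, ‖z i - z (ρ i)‖ₑ ^ (-a i)

theorem measurable_starWeight [MeasurableSpace E] [BorelSpace E] [SecondCountableTopology E]
    (ρ : ι → ι) (a : ι → ℝ) : Measurable (starWeight (E := E) ρ a) := by
  unfold starWeight
  fun_prop

theorem starWeight_shear (hρ : ∀ i, ρ (ρ i) = ρ i) (a : ι → ℝ) (u : ι → E) :
    starWeight ρ a (shear ρ hρ u) = ∏ i, if ρ i = i then 1 else ‖u i‖ₑ ^ (-a i) := by
  rw [starWeight, Finset.prod_filter]
  refine Finset.prod_congr rfl fun i _ => ?_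
  by_cases hi : ρ i = i <;> simp [shear, hi, hρ]

theorem integrableAtFilter_starWeight [NormedSpace ℝ E]
    [FiniteDimensional ℝ E] [Nontrivial E] [MeasureSpace E] [BorelSpace E]
    [(volume : Measure E).IsAddHaarMeasure] {p : ι → E} (hρ : ∀ i, ρ (ρ i) = ρ i)
    (hp : ∀ i, p (ρ i) = p i) {a : ι → ℝ} (ha : ∀ i, ρ i ≠ i → a i < Module.finrank ℝ E) :
    IntegrableAtFilter (starWeight ρ a) (𝓝 p) := by
  let e := shear (E := E) ρ hρ
  let f (i : ι) (y : E) : ℝ≥0∞ := if ρ i = i then 1 else ‖y‖ₑ ^ (-a i)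
  have hf i : Measurable (f i) := by
    unfold f
    split_ifs <;> fun_prop
  have hfi i : IntegrableAtFilter (f i) (𝓝 (e.symm p i)) := by
    by_cases hi : ρ i = i
    · obtain ⟨s, hs, hfin⟩ := (volume : Measure E).finiteAt_nhds (e.symm p i)
      rw [integrableAtFilter_iff_lintegral_ne_top (hf i)]
      exact ⟨s, hs, by simpa [f, hi] using hfin.ne⟩
    · have hpi : e.symm p i = 0 := shear_symm_apply_eq_zero hρ (hp i) hi
      simpa [f, hi, hpi] using integrableAtFilter_enorm_rpow_neg_iff.2 (ha i hi)
  have hprod := integrableAtFilter_pi_prod hf hfi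
  rw [← nhds_pi, ← volume_pi] at hprod
  rw [← e.apply_symm_apply p,
    ← integrableAtFilter_nhds_comp_homeomorph_iff e (measurePreserving_shear hρ)]
  convert hprod using 2 with u
  exact starWeight_shear hρ a u

theorem pairDist_rpow_neg_le_sum_starWeight {κ : Type*} (p : ι → κ) {s : ℝ} (hs : 0 ≤ s)
    (z : ι → E) :
    pairDist {a ∈ Finset.univ.offDiag | p a.1 = p a.2} z ^ (-s) ≤
      ∑ ρ with IsClusterCenter p ρ, starWeight ρ (fun i => s * #{j | p j = p i}) z := by
  obtain ⟨ρ, hρ, hle⟩ := exists_isClusterCenter_prod_pow_le p fun i j => ‖z j - z i‖ₑ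
  have hle' : ∏ i with ρ i ≠ i, ‖z i - z (ρ i)‖ₑ ^ #{j | p j = p i} ≤
      pairDist {a ∈ Finset.univ.offDiag | p a.1 = p a.2} z := by
    simpa only [pairDist, enorm_sub_rev] using hle
  calc pairDist {a ∈ Finset.univ.offDiag | p a.1 = p a.2} z ^ (-s)
      ≤ (∏ i with ρ i ≠ i, ‖z i - z (ρ i)‖ₑ ^ #{j | p j = p i}) ^ (-s) :=
        ennreal_rpow_neg_anti hs hle'
    _ = starWeight ρ (fun i => s * #{j | p j = p i}) z := by
        rw [← ENNReal.prod_rpow_of_ne_top fun i _ => by finiteness, starWeight]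
        refine Finset.prod_congr rfl fun i _ => ?_
        rw [← ENNReal.rpow_natCast_mul, mul_neg, mul_comm]
    _ ≤ _ := Finset.single_le_sum_of_canonicallyOrdered
        (f := fun ρ : ι → ι => starWeight ρ (fun i => s * #{j | p j = p i}) z)
        (by simpa using hρ)

end StarWeight

section PairDistShear

open scoped Finset

variable {ι E : Type*} [Fintype ι] [NormedAddCommGroup E] {ρ : ι → ι}

theorem enorm_shear_sub_shear_le (hρ : ∀ i, ρ (ρ i) = ρ i) (u : ι → E) {i j : ι}
    (hij : ρ i = ρ j) :
    ‖shear ρ hρ u i - shear ρ hρ u j‖ₑ ≤ 2 * ‖fun k : {k // ρ k ≠ k} => u k‖ₑ := by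
  have hdev k : ‖shear ρ hρ u k - u (ρ k)‖ₑ ≤ ‖fun k : {k // ρ k ≠ k} => u k‖ₑ := by
    by_cases hk : ρ k = k
    · simp [shear, hk]
    · rw [enorm_le_iff_norm_le]
      simpa [shear, hk] using norm_le_pi_norm (fun k : {k // ρ k ≠ k} => u k) ⟨k, hk⟩
  calc ‖shear ρ hρ u i - shear ρ hρ u j‖ₑ
      = ‖(shear ρ hρ u i - u (ρ i)) - (shear ρ hρ u j - u (ρ j))‖ₑ := by rw [hij]; abel_nf
    _ ≤ ‖shear ρ hρ u i - u (ρ i)‖ₑ + ‖shear ρ hρ u j - u (ρ j)‖ₑ := enorm_sub_le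
    _ ≤ 2 * ‖fun k : {k // ρ k ≠ k} => u k‖ₑ := by
        rw [two_mul]
        exact add_le_add (hdev i) (hdev j)

theorem pairDist_shear_le (hρ : ∀ i, ρ (ρ i) = ρ i) {T : Finset (ι × ι)}
    (hT : ∀ a ∈ T, ρ a.1 = ρ a.2) (u : ι → E) :
    pairDist T (shear ρ hρ u) ≤ (2 * ‖fun k : {k // ρ k ≠ k} => u k‖ₑ) ^ #T :=
  Finset.prod_le_pow_card _ _ _ fun a ha => enorm_shear_sub_shear_le hρ u (hT a ha)

end PairDistShear

section OffDiagonal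

open scoped Finset

variable {ι E : Type*} [Fintype ι] [NormedAddCommGroup E] [NormedSpace ℝ E]
  [FiniteDimensional ℝ E] [Nontrivial E] [MeasureSpace E] [BorelSpace E]
  [(volume : Measure E).IsAddHaarMeasure] {s : ℝ} {p : ι → E}

theorem integrableAtFilter_pairDist_offDiag (hs : 0 ≤ s)
    (hp : ∀ w, 2 ≤ #{i | p i = w} → s * #{i | p i = w} < Module.finrank ℝ E) :
    IntegrableAtFilter (fun z : ι → E => pairDist Finset.univ.offDiag z ^ (-s)) (𝓝 p) := by
  refine integrableAtFilter_pairDist_of_sdiff_separated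
    (Finset.filter_subset (fun a => p a.1 = p a.2) _) (by simp +contextual) ?_
  refine integrableAtFilter_of_eventually_le (integrableAtFilter_finsetSum _ fun ρ hρ => ?_)
    (measurable_pairDist_rpow _ _)
    (Finset.measurable_fun_sum _ fun ρ _ => measurable_starWeight ρ _)
    (.of_forall fun z => pairDist_rpow_neg_le_sum_starWeight p hs z)
  have hρ : IsClusterCenter p ρ := by simpa using hρ
  refine integrableAtFilter_starWeight hρ.idem hρ.map_center fun i hi => hp (p i) ?_
  exact Finset.one_lt_card.2 ⟨ρ i, by simp [hρ.map_center], i, by simp, hi⟩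

theorem mul_card_lt_of_integrableAtFilter_pairDist {ρ : ι → ι} (hρ : ∀ i, ρ (ρ i) = ρ i)
    (hρ_ne : ∃ i, ρ i ≠ i) (hp : ∀ i, p (ρ i) = p i) {T : Finset (ι × ι)}
    (hT : ∀ a ∈ T, ρ a.1 = ρ a.2) (hs : 0 ≤ s)
    (h : IntegrableAtFilter (fun z : ι → E => pairDist T z ^ (-s)) (𝓝 p)) :
    s * #T < #{i | ρ i ≠ i} * Module.finrank ℝ E := by
  let e := shear (E := E) ρ hρ
  let g (y : {i // ρ i ≠ i} → E) : ℝ≥0∞ := 2 ^ (-(s * #T)) * ‖y‖ₑ ^ (-(s * #T))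
  have : Nonempty {i // ρ i ≠ i} := by simpa using hρ_ne
  have hp₀ : (fun i : {i // ρ i ≠ i} => e.symm p i) = 0 :=
    funext fun ⟨i, hi⟩ => shear_symm_apply_eq_zero hρ (hp i) hi
  have hle (u : ι → E) : g (fun i => u i) ≤ pairDist T (e u) ^ (-s) := by
    calc g (fun i => u i) = ((2 * ‖fun i : {i // ρ i ≠ i} => u i‖ₑ) ^ #T) ^ (-s) := by
          rw [← ENNReal.rpow_natCast_mul, mul_neg, mul_comm (#T : ℝ),
            ENNReal.mul_rpow_of_ne_top (by simp) enorm_ne_top]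
      _ ≤ pairDist T (e u) ^ (-s) := ennreal_rpow_neg_anti hs (pairDist_shear_le hρ hT u)
  rw [← e.apply_symm_apply p,
    ← integrableAtFilter_nhds_comp_homeomorph_iff e (measurePreserving_shear hρ)] at h
  have hgm : Measurable g := by fun_prop
  have hcomp : IntegrableAtFilter (fun u : ι → E => g fun i => u i) (𝓝 (e.symm p)) :=
    integrableAtFilter_of_eventually_le h (by fun_prop)
      ((measurable_pairDist_rpow T _).comp e.measurable) (.of_forall hle)
  have hg : IntegrableAtFilter g (𝓝 0) :=
    hp₀ ▸ integrableAtFilter_of_comp_domRestrict hgm hcomp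
  rw [integrableAtFilter_const_mul_iff (by simp) (by simp) (by fun_prop),
    integrableAtFilter_enorm_rpow_neg_iff] at hg
  simpa [Module.finrank_pi_fintype, Fintype.card_subtype] using hg

theorem mul_card_lt_of_integrableAtFilter_pairDist_offDiag (hs : 0 ≤ s)
    (h : IntegrableAtFilter (fun z : ι → E => pairDist Finset.univ.offDiag z ^ (-s)) (𝓝 p))
    {w : E} (hw : 2 ≤ #{i | p i = w}) : s * #{i | p i = w} < Module.finrank ℝ E := by
  set S : Finset ι := {i | p i = w}
  have hS i : i ∈ S ↔ p i = w := Finset.mem_filter_univ i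
  obtain ⟨o, ho, k, hk, hko⟩ := Finset.one_lt_card.1 hw
  have hp i : p (collapse S o i) = p i := by
    by_cases hi : i ∈ S
    · rw [collapse, if_pos hi, (hS o).1 ho, (hS i).1 hi]
    · rw [collapse, if_neg hi]
  have hmul : s * #S.offDiag < #(S.erase o) * Module.finrank ℝ E := by
    rw [← filter_collapse_ne]
    exact mul_card_lt_of_integrableAtFilter_pairDist (collapse_collapse S o)
      ⟨k, by simp [collapse, hk, hko]⟩ hp
      (fun a ha => (collapse_eq_collapse_iff ho).2 (by simp_all)) hs
      (integrableAtFilter_pairDist_of_subset (Finset.offDiag_mono (Finset.subset_univ S)) hs h)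
  have hoff : (#S.offDiag : ℝ) = #(S.erase o) * #S := by
    rw [Finset.offDiag_card, Finset.card_erase_of_mem ho, ← Nat.cast_mul, Nat.sub_one_mul]
  rw [hoff, mul_left_comm] at hmul
  exact lt_of_mul_lt_mul_left hmul (by positivity)

theorem integrableAtFilter_pairDist_offDiag_iff (hs : 0 ≤ s) :
    IntegrableAtFilter (fun z : ι → E => pairDist Finset.univ.offDiag z ^ (-s)) (𝓝 p) ↔
      ∀ w, 2 ≤ #{i | p i = w} → s * #{i | p i = w} < Module.finrank ℝ E :=
  ⟨fun h _ => mul_card_lt_of_integrableAtFilter_pairDist_offDiag hs h,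
    integrableAtFilter_pairDist_offDiag hs⟩

theorem forall_integrableAtFilter_pairDist_offDiag_iff (hs : 0 ≤ s) {m : ℕ} (hm : 2 ≤ m)
    (hmι : m ≤ Fintype.card ι) :
    (∀ p : ι → E, (∀ w, #{i | p i = w} ≤ m) →
      IntegrableAtFilter (fun z : ι → E => pairDist Finset.univ.offDiag z ^ (-s)) (𝓝 p)) ↔
      s * m < Module.finrank ℝ E := by
  simp only [integrableAtFilter_pairDist_offDiag_iff hs]
  constructor
  · intro h
    have : Infinite E := Module.Free.infinite ℝ E
    obtain ⟨p, hp, w, rfl⟩ := exists_card_fibre_eq (κ := E) (zero_lt_two.trans_le hm) hmι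
    exact h p hp w hm
  · intro h p hp w _
    refine lt_of_le_of_lt ?_ h
    gcongr
    exact hp w

end OffDiagonal

theorem prod_offDiag_eq_prod_lt_sq {ι M : Type*} [Fintype ι] [LinearOrder ι] [CommMonoid M]
    {h : ι → ι → M} (hsymm : ∀ i j, h i j = h j i) :
    ∏ a ∈ Finset.univ.offDiag, h a.1 a.2 = (∏ a : ι × ι with a.1 < a.2, h a.1 a.2) ^ 2 := by
  have hlt : (Finset.univ.offDiag : Finset (ι × ι)).filter (fun a => a.1 < a.2) =
      Finset.univ.filter fun a => a.1 < a.2 := by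
    ext a
    simpa using ne_of_lt
  have hgt : ∏ a ∈ (Finset.univ.offDiag : Finset (ι × ι)) with ¬a.1 < a.2, h a.1 a.2 =
      ∏ a : ι × ι with a.1 < a.2, h a.1 a.2 :=
    Finset.prod_equiv (Equiv.prodComm ι ι) (fun a => by grind) fun a _ => hsymm _ _
  rw [← Finset.prod_filter_mul_prod_filter_not _ fun a => a.1 < a.2, hlt, hgt, sq]

theorem prod_lt_ofReal_norm_rpow_two_mul {ι E : Type*} [Fintype ι] [LinearOrder ι]
    [NormedAddCommGroup E] (z : ι → E) (s : ℝ) :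
    ∏ a : ι × ι with a.1 < a.2, ENNReal.ofReal ‖z a.1 - z a.2‖ ^ (2 * s) =
      pairDist Finset.univ.offDiag z ^ s := by
  rw [pairDist, prod_offDiag_eq_prod_lt_sq fun i j => enorm_sub_rev (z i) (z j),
    ← ENNReal.rpow_natCast_mul, Nat.cast_two,
    ← ENNReal.prod_rpow_of_ne_top fun _ _ => enorm_ne_top]
  simp only [ofReal_norm]

theorem sub_one_div_half_of_odd {N : ℕ} (hN : 1 < N) (hodd : Odd N) :
    ((N : ℝ) - 1) / ((N / 2 : ℕ) : ℝ) = 2 := by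
  obtain ⟨k, rfl⟩ := hodd
  have hk : (k : ℝ) ≠ 0 := by norm_cast; omega
  rw [show (2 * k + 1) / 2 = k by omega]
  push_cast
  field_simp
  ring

theorem sub_one_div_half_of_even {N : ℕ} (hN : N ≠ 0) (heven : Even N) :
    ((N : ℝ) - 1) / ((N / 2 : ℕ) : ℝ) = 2 * (1 - 1 / (N : ℝ)) := by
  obtain ⟨k, rfl⟩ := heven
  have hk : (k : ℝ) ≠ 0 := by norm_cast; omega
  rw [show (k + k) / 2 = k by omega]
  push_cast
  field_simp
  ring

/-- **Uniform Gibbs polystability of ℙ¹.** Let `N ≥ 4`, `k = (N-1)/2`, `γ > 0`. The function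
`z ↦ ∏_{i<j} |z_i - z_j| ^ (-2γ/k)` is integrable near every GIT-semistable point of `ℂ^N`
(i.e. every `p` whose maximal coordinate multiplicity is at most `⌊N/2⌋`) if and only if
`γ < (N-1)/⌊N/2⌋`; this threshold equals `2` for odd `N` and `2(1-1/N)` for even `N`. -/
theorem reduced_microscopic_threshold_P1 (N : ℕ) (hN : 4 ≤ N) (γ : ℝ) (hγ : 0 < γ) :
    ((∀ p : Fin N → ℂ,
        (∀ w : ℂ, (Finset.univ.filter fun i => p i = w).card ≤ N / 2) →
        ∃ s ∈ 𝓝 p,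
          (∫⁻ z in s,
            ∏ a ∈ Finset.univ.filter (fun a : Fin N × Fin N => a.1 < a.2),
              (ENNReal.ofReal ‖z a.1 - z a.2‖) ^ (-(2 * γ / (((N : ℝ) - 1) / 2))) ∂volume) ≠ ∞) ↔
      γ < ((N : ℝ) - 1) / ((N / 2 : ℕ) : ℝ)) ∧
    (Odd N → ((N : ℝ) - 1) / ((N / 2 : ℕ) : ℝ) = 2) ∧
    (Even N → ((N : ℝ) - 1) / ((N / 2 : ℕ) : ℝ) = 2 * (1 - 1 / (N : ℝ))) := by
  refine ⟨?_, sub_one_div_half_of_odd (by omega), sub_one_div_half_of_even (by omega)⟩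
  have hN' : (0 : ℝ) < N - 1 := by
    rw [sub_pos, Nat.one_lt_cast]
    omega
  have hm : (0 : ℝ) < (N / 2 : ℕ) := Nat.cast_pos.2 (by omega)
  have hexp : -(2 * γ / (((N : ℝ) - 1) / 2)) = 2 * -(2 * γ / (N - 1)) := by
    field_simp
  have hthreshold : γ < ((N : ℝ) - 1) / (N / 2 : ℕ) ↔
      2 * γ / (N - 1) * (N / 2 : ℕ) < Module.finrank ℝ ℂ := by
    rw [Complex.finrank_real_complex, lt_div_iff₀ hm, div_mul_eq_mul_div, div_lt_iff₀ hN',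
      mul_assoc, Nat.cast_two]
    exact (mul_lt_mul_iff_of_pos_left two_pos).symm
  rw [hthreshold, hexp, ← forall_integrableAtFilter_pairDist_offDiag_iff (ι := Fin N) (E := ℂ)
    (by positivity) (by omega) (by rw [Fintype.card_fin]; omega)]
  simp only [prod_lt_ofReal_norm_rpow_two_mul,
    integrableAtFilter_iff_lintegral_ne_top (measurable_pairDist_rpow _ _)]
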